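/- Let p be an odd prime, let q ≥ 1 be an integer, let M ≥ 1 be an integer, and set θ = p^{−M} ∈ ℚ_p, so ‖θ‖_p > 1. Let f(x) = ((θx + q)/(x + θ + q − 1))², and let x₁ be a root in ℚ_p of x² + (2θ − θ² + 2q − 1)x + q² = 0 with ‖x₁‖_p = ‖θ‖_p². Then for every x ∈ ℚ_p with ‖x‖_p > 1 such that f^[n](x) ≠ 1 − θ − q for every n ≥ 0, the sequence of iterates f^[n](x) converges to x₁ as n → ∞ (in the topology of ℚ_p). -/

import Mathlib

/-!
Write `T = ‖θ‖ > 1`. The isosceles triangle principle controls `‖f x‖` outside the unit ball: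
`‖f x‖ = ‖x‖²` if `‖x‖ < T`, `‖f x‖ > T` if `‖x‖ = T` and `x` is not the pole, and `‖f x‖ = T²` if
`‖x‖ > T`. Hence every orbit that starts outside the closed unit ball and avoids the pole enters the
sphere of radius `T²` and stays there. On this sphere `f` contracts distances by `T⁻¹`, so the orbit
converges to the fixed point, which lies on the sphere. The argument uses only that `f` is a power,
of exponent at least two, of a Möbius map `x ↦ (α x + a) / (x + β)` with `‖a‖ ≤ ‖α‖ = ‖β‖`
and `‖α‖ > 1`.
-/

open Filter Function Metric Topology
open scoped NNReal

theorem tendsto_iterate_of_lipschitzOnWith {X : Type*} [PseudoMetricSpace X] {f : X → X}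
    {s : Set X} {c : ℝ≥0} {x z : X} (hc : c < 1) (hf : LipschitzOnWith c f s)
    (hs : Set.MapsTo f s s) (hz : IsFixedPt f z) (hzs : z ∈ s) (hxs : x ∈ s) :
    Tendsto (fun n => f^[n] x) atTop (𝓝 z) := by
  have dist_le (n : ℕ) : dist (f^[n] x) z ≤ (c : ℝ) ^ n * dist x z := by
    induction n with
    | zero => simp
    | succ n ih =>
      calc dist (f^[n + 1] x) z = dist (f (f^[n] x)) (f z) := by
            rw [iterate_succ_apply', hz.eq]
        _ ≤ c * dist (f^[n] x) z := hf.dist_le_mul _ (hs.iterate n hxs) _ hzs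
        _ ≤ c * (c ^ n * dist x z) := by gcongr
        _ = c ^ (n + 1) * dist x z := by ring
  have bound_tendsto : Tendsto (fun n => (c : ℝ) ^ n * dist x z) atTop (𝓝 0) := by
    simpa only [zero_mul] using
      (tendsto_pow_atTop_nhds_zero_of_lt_one c.coe_nonneg hc).mul_const (dist x z)
  exact tendsto_iff_dist_tendsto_zero.2 (squeeze_zero (fun _ => dist_nonneg) dist_le bound_tendsto)

theorem norm_add_eq_left_of_norm_lt {E : Type*} [SeminormedAddCommGroup E] [IsUltrametricDist E]
    {x y : E} (h : ‖y‖ < ‖x‖) : ‖x + y‖ = ‖x‖ := by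
  rw [IsUltrametricDist.norm_add_eq_max_of_norm_ne_norm h.ne', max_eq_left h.le]

theorem norm_pow_sub_pow_le {R : Type*} [SeminormedCommRing R] [NormOneClass R]
    [IsUltrametricDist R] {x y : R} {r : ℝ} (hx : ‖x‖ ≤ r) (hy : ‖y‖ ≤ r) (k : ℕ) :
    ‖x ^ k - y ^ k‖ ≤ r ^ (k - 1) * ‖x - y‖ := by
  have hr : 0 ≤ r := (norm_nonneg x).trans hx
  have term_le (i : ℕ) (hi : i ∈ Finset.range k) : ‖x ^ i * y ^ (k - 1 - i)‖ ≤ r ^ (k - 1) := by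
    calc ‖x ^ i * y ^ (k - 1 - i)‖ ≤ ‖x‖ ^ i * ‖y‖ ^ (k - 1 - i) :=
          (norm_mul_le _ _).trans (by gcongr <;> exact norm_pow_le _ _)
      _ ≤ r ^ i * r ^ (k - 1 - i) := by gcongr
      _ = r ^ (k - 1) := pow_mul_pow_sub r (Nat.le_sub_one_of_lt (Finset.mem_range.1 hi))
  rw [← geom_sum₂_mul]
  refine (norm_mul_le _ _).trans ?_
  gcongr
  exact IsUltrametricDist.norm_sum_le_of_forall_le_of_nonneg (pow_nonneg hr _) term_le

theorem one_lt_norm_padic_p_pow_inv (p : ℕ) [Fact p.Prime] {M : ℕ} (hM : M ≠ 0) :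
    1 < ‖((p : ℚ_[p]) ^ M)⁻¹‖ := by
  rw [norm_inv, norm_pow, one_lt_inv₀ (by simp [(Fact.out : p.Prime).pos])]
  exact pow_lt_one₀ (norm_nonneg _) Padic.norm_p_lt_one hM

theorem norm_add_natCast_sub_one {R : Type*} [SeminormedRing R] [NormOneClass R]
    [IsUltrametricDist R] {θ : R} (hθ : 1 < ‖θ‖) (q : ℕ) : ‖θ + q - 1‖ = ‖θ‖ := by
  rw [add_sub_assoc]
  refine norm_add_eq_left_of_norm_lt (lt_of_le_of_lt ?_ hθ)
  exact_mod_cast IsUltrametricDist.norm_intCast_le_one R (q - 1)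

/-- The Möbius map `x ↦ (α x + a) / (x + β)`, whose value at the pole `-β` is `0`. -/
def mobius {K : Type*} [Field K] (α a β x : K) : K := (α * x + a) / (x + β)

theorem mobius_sub_mobius {K : Type*} [Field K] {α a β x y : K}
    (hx : x + β ≠ 0) (hy : y + β ≠ 0) :
    mobius α a β x - mobius α a β y = (α * β - a) * (x - y) / ((x + β) * (y + β)) := by
  rw [mobius, mobius]
  field_simp
  ring

/-- The `k`-th power of a Möbius map. With `α = θ`, `a = q` and `β = θ + q - 1` this is the
recursion of the `(q + 1)`-state Potts model on the Cayley tree of order `k`. -/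
def mobiusPow {K : Type*} [Field K] (k : ℕ) (α a β x : K) : K := mobius α a β x ^ k

theorem isFixedPt_mobiusPow_two_of_quadratic {K : Type*} [Field K] {θ q x : K}
    (hx : x ^ 2 + (2 * θ - θ ^ 2 + 2 * q - 1) * x + q ^ 2 = 0) (hpole : x + (θ + q - 1) ≠ 0) :
    IsFixedPt (mobiusPow 2 θ q (θ + q - 1)) x := by
  rw [IsFixedPt, mobiusPow, mobius, div_pow, div_eq_iff (pow_ne_zero 2 hpole)]
  linear_combination (1 - x) * hx

section NormedField

variable {K : Type*} [NormedField K] [IsUltrametricDist K] {k : ℕ} {α a β x y z : K}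

theorem norm_mul_add_of_norm_le (ha : ‖a‖ ≤ ‖α‖) (hx : 1 < ‖x‖) : ‖α * x + a‖ = ‖α‖ * ‖x‖ := by
  rcases eq_or_ne α 0 with rfl | hα
  · simpa using ha
  · have : ‖a‖ < ‖α * x‖ := by
      rw [norm_mul]
      exact ha.trans_lt (lt_mul_of_one_lt_right (norm_pos_iff.2 hα) hx)
    rw [norm_add_eq_left_of_norm_lt this, norm_mul]

namespace mobius

theorem norm_of_norm_lt (ha : ‖a‖ ≤ ‖α‖) (hβ : ‖β‖ = ‖α‖) (hx : 1 < ‖x‖) (hxα : ‖x‖ < ‖α‖) :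
    ‖mobius α a β x‖ = ‖x‖ := by
  rw [mobius, norm_div, norm_mul_add_of_norm_le ha hx, add_comm,
    norm_add_eq_left_of_norm_lt (hβ ▸ hxα), hβ,
    mul_div_cancel_left₀ _ ((norm_nonneg x).trans_lt hxα).ne']

theorem le_norm_of_norm_eq (ha : ‖a‖ ≤ ‖α‖) (hβ : ‖β‖ = ‖α‖) (hx : 1 < ‖x‖) (hxα : ‖x‖ = ‖α‖)
    (hpole : x ≠ -β) : ‖α‖ ≤ ‖mobius α a β x‖ := by
  have den_pos : 0 < ‖x + β‖ := norm_pos_iff.2 (mt eq_neg_of_add_eq_zero_left hpole)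
  have den_le : ‖x + β‖ ≤ ‖x‖ := by
    simpa [hβ, hxα] using IsUltrametricDist.norm_add_le_max x β
  rw [mobius, norm_div, norm_mul_add_of_norm_le ha hx, le_div_iff₀ den_pos]
  gcongr

theorem norm_of_lt_norm (ha : ‖a‖ ≤ ‖α‖) (hβ : ‖β‖ = ‖α‖) (hx : 1 < ‖x‖) (hαx : ‖α‖ < ‖x‖) :
    ‖mobius α a β x‖ = ‖α‖ := by
  rw [mobius, norm_div, norm_mul_add_of_norm_le ha hx, norm_add_eq_left_of_norm_lt (hβ ▸ hαx),
    mul_div_cancel_right₀ _ (zero_lt_one.trans hx).ne']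

theorem norm_sub_of_lt_norm (hα : 1 < ‖α‖) (ha : ‖a‖ ≤ ‖α‖) (hβ : ‖β‖ = ‖α‖) (hx : ‖α‖ < ‖x‖)
    (hy : ‖α‖ < ‖y‖) :
    ‖mobius α a β x - mobius α a β y‖ = ‖α‖ ^ 2 * ‖x - y‖ / (‖x‖ * ‖y‖) := by
  have norm_den {w : K} (hw : ‖α‖ < ‖w‖) : ‖w + β‖ = ‖w‖ :=
    norm_add_eq_left_of_norm_lt (hβ ▸ hw)
  have den_ne_zero {w : K} (hw : ‖α‖ < ‖w‖) : w + β ≠ 0 := by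
    rw [← norm_pos_iff, norm_den hw]
    exact (norm_nonneg α).trans_lt hw
  have norm_det : ‖α * β - a‖ = ‖α‖ ^ 2 := by
    have : ‖-a‖ < ‖α * β‖ := by
      rw [norm_neg, norm_mul, hβ]
      exact ha.trans_lt (lt_mul_of_one_lt_right (zero_lt_one.trans hα) hα)
    rw [sub_eq_add_neg, norm_add_eq_left_of_norm_lt this, norm_mul, hβ, sq]
  rw [mobius_sub_mobius (den_ne_zero hx) (den_ne_zero hy), norm_div, norm_mul, norm_mul, norm_det,
    norm_den hx, norm_den hy]

end mobius

namespace mobiusPow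

theorem norm_of_norm_lt (ha : ‖a‖ ≤ ‖α‖) (hβ : ‖β‖ = ‖α‖) (hx : 1 < ‖x‖) (hxα : ‖x‖ < ‖α‖) :
    ‖mobiusPow k α a β x‖ = ‖x‖ ^ k := by
  rw [mobiusPow, norm_pow, mobius.norm_of_norm_lt ha hβ hx hxα]

theorem lt_norm_of_norm_eq (hk : 1 < k) (ha : ‖a‖ ≤ ‖α‖) (hβ : ‖β‖ = ‖α‖) (hx : 1 < ‖x‖)
    (hxα : ‖x‖ = ‖α‖) (hpole : x ≠ -β) : ‖α‖ < ‖mobiusPow k α a β x‖ := by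
  calc ‖α‖ < ‖α‖ ^ k := lt_self_pow₀ (hxα ▸ hx) hk
    _ ≤ ‖mobius α a β x‖ ^ k := by
      gcongr
      exact mobius.le_norm_of_norm_eq ha hβ hx hxα hpole
    _ = ‖mobiusPow k α a β x‖ := (norm_pow _ _).symm

theorem norm_of_lt_norm (ha : ‖a‖ ≤ ‖α‖) (hβ : ‖β‖ = ‖α‖) (hx : 1 < ‖x‖) (hαx : ‖α‖ < ‖x‖) :
    ‖mobiusPow k α a β x‖ = ‖α‖ ^ k := by
  rw [mobiusPow, norm_pow, mobius.norm_of_lt_norm ha hβ hx hαx]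

theorem mapsTo_sphere (hk : 1 < k) (hα : 1 < ‖α‖) (ha : ‖a‖ ≤ ‖α‖) (hβ : ‖β‖ = ‖α‖) :
    Set.MapsTo (mobiusPow k α a β) (sphere 0 (‖α‖ ^ k)) (sphere 0 (‖α‖ ^ k)) := by
  intro x hx
  rw [mem_sphere_zero_iff_norm] at hx ⊢
  have hαx : ‖α‖ < ‖x‖ := hx ▸ lt_self_pow₀ hα hk
  exact norm_of_lt_norm ha hβ (hα.trans hαx) hαx

theorem lipschitzOnWith_sphere (hk : 1 < k) (hα : 1 < ‖α‖) (ha : ‖a‖ ≤ ‖α‖) (hβ : ‖β‖ = ‖α‖) :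
    LipschitzOnWith (‖α‖₊ ^ (k - 1))⁻¹ (mobiusPow k α a β) (sphere 0 (‖α‖ ^ k)) := by
  refine .of_dist_le_mul fun x hx y hy => ?_
  rw [mem_sphere_zero_iff_norm] at hx hy
  have hαx : ‖α‖ < ‖x‖ := hx ▸ lt_self_pow₀ hα hk
  have hαy : ‖α‖ < ‖y‖ := hy ▸ lt_self_pow₀ hα hk
  have pow_eq : ‖α‖ ^ k = ‖α‖ ^ (k - 1) * ‖α‖ := (pow_sub_one_mul (by lia) ‖α‖).symm
  simp only [dist_eq_norm, NNReal.coe_inv, NNReal.coe_pow, coe_nnnorm]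
  calc ‖mobiusPow k α a β x - mobiusPow k α a β y‖
      ≤ ‖α‖ ^ (k - 1) * ‖mobius α a β x - mobius α a β y‖ :=
        norm_pow_sub_pow_le (mobius.norm_of_lt_norm ha hβ (hα.trans hαx) hαx).le
          (mobius.norm_of_lt_norm ha hβ (hα.trans hαy) hαy).le k
    _ = ‖α‖ ^ (k - 1) * (‖α‖ ^ 2 * ‖x - y‖ / (‖α‖ ^ k * ‖α‖ ^ k)) := by
        rw [mobius.norm_sub_of_lt_norm hα ha hβ hαx hαy, hx, hy]
    _ = (‖α‖ ^ (k - 1))⁻¹ * ‖x - y‖ := by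
        have : ‖α‖ ≠ 0 := (zero_lt_one.trans hα).ne'
        rw [pow_eq]
        field_simp

theorem exists_le_norm_iterate (hk : 1 < k) (ha : ‖a‖ ≤ ‖α‖) (hβ : ‖β‖ = ‖α‖) (hx : 1 < ‖x‖) :
    ∃ n, ‖α‖ ≤ ‖(mobiusPow k α a β)^[n] x‖ := by
  by_contra! norm_lt
  have norm_iterate (n : ℕ) : ‖(mobiusPow k α a β)^[n] x‖ = ‖x‖ ^ k ^ n := by
    induction n with
    | zero => simp
    | succ n ih =>
      have one_lt : 1 < ‖(mobiusPow k α a β)^[n] x‖ := ih ▸ one_lt_pow₀ hx (by positivity)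
      rw [iterate_succ_apply', norm_of_norm_lt ha hβ one_lt (norm_lt n), ih, pow_succ, pow_mul]
  obtain ⟨n, hn⟩ := pow_unbounded_of_one_lt ‖α‖ hx
  have : ‖x‖ ^ n ≤ ‖x‖ ^ k ^ n := pow_le_pow_right₀ hx.le (Nat.lt_pow_self hk).le
  exact (hn.trans_le this).not_gt (norm_iterate n ▸ norm_lt n)

theorem exists_iterate_mem_sphere (hk : 1 < k) (hα : 1 < ‖α‖) (ha : ‖a‖ ≤ ‖α‖) (hβ : ‖β‖ = ‖α‖)
    (hx : 1 < ‖x‖) (hpole : ∀ n, (mobiusPow k α a β)^[n] x ≠ -β) :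
    ∃ n, (mobiusPow k α a β)^[n] x ∈ sphere 0 (‖α‖ ^ k) := by
  have mem_sphere_succ {n : ℕ} (hn : ‖α‖ < ‖(mobiusPow k α a β)^[n] x‖) :
      (mobiusPow k α a β)^[n + 1] x ∈ sphere 0 (‖α‖ ^ k) := by
    rw [mem_sphere_zero_iff_norm, iterate_succ_apply', norm_of_lt_norm ha hβ (hα.trans hn) hn]
  obtain ⟨n, hn⟩ := exists_le_norm_iterate hk ha hβ hx
  rcases hn.lt_or_eq with hlt | heq
  · exact ⟨n + 1, mem_sphere_succ hlt⟩
  · refine ⟨n + 2, mem_sphere_succ ?_⟩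
    rw [iterate_succ_apply']
    exact lt_norm_of_norm_eq hk ha hβ (heq ▸ hα) heq.symm (hpole n)

theorem mem_sphere_of_isFixedPt (hk : 1 < k) (hα : 1 < ‖α‖) (ha : ‖a‖ ≤ ‖α‖) (hβ : ‖β‖ = ‖α‖)
    (hz : IsFixedPt (mobiusPow k α a β) z) (hz_norm : 1 < ‖z‖) : z ∈ sphere 0 (‖α‖ ^ k) := by
  have ne_pole : z ≠ -β := by
    rintro rfl
    have : -β = 0 := by simpa [mobiusPow, mobius, (by lia : k ≠ 0)] using hz.eq.symm
    exact zero_lt_one.not_gt (by rwa [this, norm_zero] at hz_norm)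
  obtain ⟨n, hn⟩ := exists_iterate_mem_sphere hk hα ha hβ hz_norm
    fun n => (hz.iterate n).eq.symm ▸ ne_pole
  rwa [(hz.iterate n).eq] at hn

end mobiusPow

end NormedField

theorem stmt_18_general {K : Type*} [NormedField K] [IsUltrametricDist K] {k : ℕ} {α β a x z : K}
    (hk : 1 < k) (hα : 1 < ‖α‖) (ha : ‖a‖ ≤ ‖α‖) (hβ : ‖β‖ = ‖α‖)
    (hz : IsFixedPt (mobiusPow k α a β) z) (hz_norm : 1 < ‖z‖) (hx : 1 < ‖x‖)
    (hpole : ∀ n, (mobiusPow k α a β)^[n] x ≠ -β) :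
    Tendsto (fun n => (mobiusPow k α a β)^[n] x) atTop (𝓝 z) := by
  obtain ⟨N, hN⟩ := mobiusPow.exists_iterate_mem_sphere hk hα ha hβ hx hpole
  have ratio_lt_one : (‖α‖₊ ^ (k - 1))⁻¹ < 1 :=
    inv_lt_one_of_one_lt₀ (one_lt_pow₀ hα (by lia))
  rw [← tendsto_add_atTop_iff_nat N]
  simpa only [iterate_add_apply] using
    tendsto_iterate_of_lipschitzOnWith ratio_lt_one
      (mobiusPow.lipschitzOnWith_sphere hk hα ha hβ) (mobiusPow.mapsTo_sphere hk hα ha hβ) hz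
      (mobiusPow.mem_sphere_of_isFixedPt hk hα ha hβ hz hz_norm) hN

theorem stmt_18 (p : ℕ) [Fact p.Prime] (hp2 : p ≠ 2)
    (q : ℕ) (hq : 1 ≤ q) (M : ℕ) (hM : 1 ≤ M)
    (θ : ℚ_[p]) (hθ : θ = ((p : ℚ_[p]) ^ M)⁻¹)
    (f : ℚ_[p] → ℚ_[p])
    (hf : f = fun x => ((θ * x + q) / (x + θ + q - 1)) ^ 2)
    (x₁ : ℚ_[p])
    (h₁ : x₁ ^ 2 + (2 * θ - θ ^ 2 + 2 * q - 1) * x₁ + q ^ 2 = 0)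
    (hn₁ : ‖x₁‖ = ‖θ‖ ^ 2)
    (x : ℚ_[p]) (hx : 1 < ‖x‖)
    (hpole : ∀ n : ℕ, f^[n] x ≠ 1 - θ - q) :
    Filter.Tendsto (fun n => f^[n] x) Filter.atTop (nhds x₁) := by
  have hθ_norm : 1 < ‖θ‖ := hθ ▸ one_lt_norm_padic_p_pow_inv p (by lia)
  have hβ : ‖θ + q - 1‖ = ‖θ‖ := norm_add_natCast_sub_one hθ_norm q
  have hx₁ : ‖θ‖ < ‖x₁‖ := hn₁ ▸ lt_self_pow₀ hθ_norm one_lt_two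
  have hfix : IsFixedPt (mobiusPow 2 θ q (θ + q - 1)) x₁ :=
    isFixedPt_mobiusPow_two_of_quadratic h₁ fun h =>
      hx₁.ne' (by rw [eq_neg_of_add_eq_zero_left h, norm_neg, hβ])
  obtain rfl : f = mobiusPow 2 θ q (θ + q - 1) := by
    simp only [hf, funext_iff, mobiusPow, mobius, add_sub_assoc, add_assoc, implies_true]
  have hq_norm : ‖(q : ℚ_[p])‖ ≤ ‖θ‖ :=
    (IsUltrametricDist.norm_natCast_le_one ℚ_[p] q).trans hθ_norm.le
  have pole_eq : 1 - θ - q = -(θ + q - 1) := by ring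
  exact stmt_18_general one_lt_two hθ_norm hq_norm hβ hfix (hθ_norm.trans hx₁) hx (pole_eq ▸ hpole)
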